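/- Let G be a connected bridgeless cubic graph in which every 2-factor consists only of 5-cycles. If u,v,w,x are vertices of G with (u,v),(v,w),(w,x) edges of G (a path of length three), then there is a perfect matching of G containing both edges (u,v) and (w,x). -/

import Mathlib

/-! Multigraphs: vertex type `V`, edge type `E`, incidence map `ends : E → Sym2 V`. -/

namespace Mg

variable {V E : Type}

/-- No loops: no edge has equal endpoints. -/
def NoLoops (ends : E → Sym2 V) : Prop := ∀ e, ¬ (ends e).IsDiag

/-- Cubic: every vertex is incident with exactly three edges. -/
def IsCubic (ends : E → Sym2 V) : Prop := ∀ v, {e | v ∈ ends e}.ncard = 3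

/-- Reachability using only edges in `F`. -/
def Reach (ends : E → Sym2 V) (F : Set E) : V → V → Prop :=
  Relation.ReflTransGen (fun a b => ∃ e ∈ F, ends e = s(a, b))

/-- Connected. -/
def Connected (ends : E → Sym2 V) : Prop := ∀ v w, Reach ends Set.univ v w

/-- Bridgeless: the endpoints of each edge remain joined after its removal. -/
def Bridgeless (ends : E → Sym2 V) : Prop :=
  ∀ e v w, ends e = s(v, w) → Reach ends {f | f ≠ e} v w

/-- A 2-factor: every vertex is incident with exactly two edges of `F`. -/
def IsTwoFactor (ends : E → Sym2 V) (F : Set E) : Prop :=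
  ∀ v, {e | e ∈ F ∧ v ∈ ends e}.ncard = 2

/-- The component of `v` in the spanning subgraph with edge set `F`. -/
def component (ends : E → Sym2 V) (F : Set E) (v : V) : Set V := {w | Reach ends F v w}

/-- Every 2-factor consists only of 5-cycles: each component of any 2-factor
has exactly five vertices. -/
def TwoFactorsAllC5 (ends : E → Sym2 V) : Prop :=
  ∀ F : Set E, IsTwoFactor ends F → ∀ v, (component ends F v).ncard = 5

/-- A perfect matching: every vertex is incident with exactly one edge of `M`. -/
def IsPerfectMatching (ends : E → Sym2 V) (M : Set E) : Prop :=
  ∀ v, ∃! e, e ∈ M ∧ v ∈ ends e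

/-- A cycle of length `n`: `n` distinct vertices and `n` distinct edges, cyclically. -/
def HasCycle (ends : E → Sym2 V) (n : ℕ) : Prop :=
  ∃ (c : ZMod n → V) (f : ZMod n → E), Function.Injective c ∧ Function.Injective f ∧
    ∀ i, ends (f i) = s(c i, c (i + 1))

end Mg

/-!
Suppose no perfect matching contains `e₁ = uv` and `e₃ = wx`. Tutte's theorem for `G - {u, v, w, x}`
gives a set `S ⊇ {u, v, w, x}` and at least `|S| - 2` odd components of `G - S`. Each of these sends
at least three edges to `S`, and at most `3 |S| - 6` edges leave `S`, since `e₁`, `e₂`, `e₃` lie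
inside it. So equality holds throughout: `e₁, e₂, e₃` are the only edges inside `S`, and each odd
component is bounded by a 3-edge-cut.

Complementing a perfect matching through `e₁` yields a pentagon `b v w x a`, where `a` and `b` lie
in one odd component `K`. A perfect matching `N` through `ab` uses the third edge leaving `K`, hence
the pentagon of the complement of `N` that leaves `K` along `ax` must come back along `vb`. Since
`ab` is not one of its edges, `xv` is. But then `xv` is a fourth edge inside `S`.
-/

namespace Mg

section SimpleGraph

variable {A : Type*} {G : SimpleGraph A}

/-- Disjoint odd vertex sets `K i` avoiding `S`, each a union of components of `G - S`: for
`n > |S|` the obstruction to perfect matchings in Tutte's theorem. -/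
structure IsOddSeparation (G : SimpleGraph A) (S : Set A) {n : ℕ} (K : Fin n → Set A) : Prop where
  pairwise_disjoint : Pairwise (Function.onFun Disjoint K)
  disjoint : ∀ i, Disjoint (K i) S
  odd_ncard : ∀ i, Odd (K i).ncard
  mem_of_adj : ∀ {i a b}, G.Adj a b → a ∈ K i → b ∉ S → b ∈ K i

theorem exists_isOddSeparation_deleteVerts [Finite A] (G : SimpleGraph A) (T : Set A) :
    ∃ K : Fin ((⊤ : G.Subgraph).deleteVerts T).coe.oddComponents.ncard → Set A,
      IsOddSeparation G T K := by
  set J := ((⊤ : G.Subgraph).deleteVerts T).coe with hJ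
  let c : Fin J.oddComponents.ncard ≃ J.oddComponents :=
    (Finite.equivFinOfCardEq (Nat.card_coe_set_eq _)).symm
  refine ⟨fun i ↦ Subtype.val '' (c i).1.supp, ?_, ?_, ?_, ?_⟩
  · intro i j hij
    refine (Set.disjoint_image_iff Subtype.val_injective).2 ?_
    exact SimpleGraph.pairwise_disjoint_supp_connectedComponent J
      fun h ↦ hij (c.injective (Subtype.ext h))
  · rintro i
    refine Set.disjoint_left.2 ?_
    rintro _ ⟨a, -, rfl⟩ ha
    exact a.2.2 ha
  · intro i
    rw [Set.ncard_image_of_injective _ Subtype.val_injective]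
    exact (c i).2
  · rintro i _ b hab ⟨a, ha, rfl⟩ hb
    refine ⟨⟨b, trivial, hb⟩, ?_, rfl⟩
    refine SimpleGraph.ConnectedComponent.mem_supp_of_adj_mem_supp _ ha ?_
    simpa [hJ, hb, hab] using a.2

theorem IsOddSeparation.of_induce_compl {W : Set A} {T : Set ↥Wᶜ} {n : ℕ}
    {K : Fin n → Set ↥Wᶜ} (hK : IsOddSeparation (G.induce Wᶜ) T K) :
    IsOddSeparation G (W ∪ Subtype.val '' T) fun i ↦ Subtype.val '' K i where
  pairwise_disjoint _ _ hij :=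
    (Set.disjoint_image_iff Subtype.val_injective).2 (hK.pairwise_disjoint hij)
  disjoint i := by
    refine Set.disjoint_union_right.2 ⟨Set.disjoint_left.2 ?_,
      (Set.disjoint_image_iff Subtype.val_injective).2 (hK.disjoint i)⟩
    rintro _ ⟨a, -, rfl⟩
    exact a.2
  odd_ncard i := by
    rw [Set.ncard_image_of_injective _ Subtype.val_injective]
    exact hK.odd_ncard i
  mem_of_adj := by
    rintro i _ b hab ⟨a, ha, rfl⟩ hb
    rw [Set.mem_union, not_or] at hb
    exact ⟨⟨b, hb.1⟩, hK.mem_of_adj hab ha fun hT ↦ hb.2 ⟨_, hT, rfl⟩, rfl⟩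

/- The defect is at least two because `|T|` and the number of odd components of `G - T` have the
same parity. -/
theorem exists_isOddSeparation_of_forall_not_isPerfectMatching [Finite A]
    (heven : Even (Nat.card A)) (hG : ∀ M : G.Subgraph, ¬ M.IsPerfectMatching) :
    ∃ (T : Set A) (n : ℕ) (K : Fin n → Set A), IsOddSeparation G T K ∧ T.ncard + 2 ≤ n := by
  obtain ⟨T, hT⟩ : ∃ T, G.IsTutteViolator T := by
    simpa using mt SimpleGraph.tutte.2 (not_exists.2 hG)
  obtain ⟨K, hK⟩ := exists_isOddSeparation_deleteVerts G T
  refine ⟨T, _, K, hK, ?_⟩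
  have hverts : Nat.card ((⊤ : G.Subgraph).deleteVerts T).verts + T.ncard = Nat.card A := by
    rw [Nat.card_coe_set_eq, SimpleGraph.Subgraph.deleteVerts_verts,
      SimpleGraph.Subgraph.verts_top, ← Set.compl_eq_univ_sdiff, add_comm,
      Set.ncard_add_ncard_compl]
  have hparity := SimpleGraph.odd_ncard_oddComponents ((⊤ : G.Subgraph).deleteVerts T).coe
  have hlt : T.ncard < _ := hT
  grind

theorem exists_isOddSeparation_of_induce_compl [Finite A] {W : Set A}
    (heven : Even (Nat.card ↥Wᶜ)) (hW : ∀ M : (G.induce Wᶜ).Subgraph, ¬ M.IsPerfectMatching) :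
    ∃ (S : Set A) (n : ℕ) (K : Fin n → Set A),
      IsOddSeparation G S K ∧ W ⊆ S ∧ S.ncard + 2 ≤ n + W.ncard := by
  obtain ⟨T, n, K, hK, hT⟩ := exists_isOddSeparation_of_forall_not_isPerfectMatching heven hW
  refine ⟨_, n, _, hK.of_induce_compl, Set.subset_union_left, ?_⟩
  have hle := Set.ncard_union_le W (Subtype.val '' T)
  rw [Set.ncard_image_of_injective _ Subtype.val_injective] at hle
  omega

theorem neighborSet_eq_pair {a b c : A} (ha : (G.neighborSet a).ncard = 2) (hab : G.Adj a b)
    (hac : G.Adj a c) (hbc : b ≠ c) : G.neighborSet a = {b, c} := by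
  have hsub : {b, c} ⊆ G.neighborSet a := Set.pair_subset hab hac
  refine (Set.eq_of_subset_of_ncard_le hsub ?_ (Set.finite_of_ncard_ne_zero (by omega))).symm
  rw [ha, Set.ncard_pair hbc]

theorem supp_connectedComponentMk_subset {a : A} {X : Set A} (ha : a ∈ X)
    (hX : ∀ p ∈ X, G.neighborSet p ⊆ X) : (G.connectedComponentMk a).supp ⊆ X := by
  intro b hb
  have hab : Relation.ReflTransGen G.Adj a b :=
    (SimpleGraph.reachable_iff_reflTransGen a b).1 (SimpleGraph.ConnectedComponent.exact hb).symm
  induction hab with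
  | refl => exact ha
  | tail hreach hadj ih =>
    exact hX _ (ih (SimpleGraph.ConnectedComponent.sound
      ((SimpleGraph.reachable_iff_reflTransGen _ _).2 hreach).symm)) hadj

/-- `G` is a disjoint union of pentagons. -/
structure IsPentagonUnion (G : SimpleGraph A) : Prop where
  ncard_neighborSet : ∀ a, (G.neighborSet a).ncard = 2
  ncard_supp : ∀ c : G.ConnectedComponent, c.supp.ncard = 5

namespace IsPentagonUnion

variable {p₁ p₂ p₃ p₄ : A}

theorem exists_adj_ne (hG : IsPentagonUnion G) (a b : A) : ∃ c, G.Adj a c ∧ c ≠ b := by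
  have hone : 1 < (G.neighborSet a).ncard := by simp [hG.ncard_neighborSet]
  exact Set.exists_ne_of_one_lt_ncard hone b

theorem not_adj_of_adj_of_adj (hG : IsPentagonUnion G) (h₁₂ : G.Adj p₁ p₂) (h₂₃ : G.Adj p₂ p₃) :
    ¬ G.Adj p₃ p₁ := by
  intro h₃₁
  have hsub : (G.connectedComponentMk p₁).supp ⊆ {p₁, p₂, p₃} := by
    refine supp_connectedComponentMk_subset (by simp) ?_
    rintro p (rfl | rfl | rfl)
    · rw [neighborSet_eq_pair (hG.ncard_neighborSet p) h₁₂ h₃₁.symm h₂₃.ne]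
      simp
    · rw [neighborSet_eq_pair (hG.ncard_neighborSet p) h₁₂.symm h₂₃ h₃₁.ne.symm]
      simp [Set.insert_subset_iff]
    · rw [neighborSet_eq_pair (hG.ncard_neighborSet p) h₂₃.symm h₃₁ h₁₂.ne.symm]
      simp [Set.insert_subset_iff]
  have hle := Set.ncard_le_ncard hsub
  rw [hG.ncard_supp, Set.ncard_insert_of_notMem (by simp [h₁₂.ne, h₃₁.ne.symm]),
    Set.ncard_pair h₂₃.ne] at hle
  omega

theorem exists_supp_eq_insert (hG : IsPentagonUnion G) (h₁₂ : G.Adj p₁ p₂) (h₂₃ : G.Adj p₂ p₃)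
    (h₃₄ : G.Adj p₃ p₄) (h₁₃ : p₁ ≠ p₃) (h₁₄ : p₁ ≠ p₄) (h₂₄ : p₂ ≠ p₄) :
    ∃ t ∉ ({p₁, p₂, p₃, p₄} : Set A),
      (G.connectedComponentMk p₁).supp = {t, p₁, p₂, p₃, p₄} := by
  set C := (G.connectedComponentMk p₁).supp
  have hpath : ({p₁, p₂, p₃, p₄} : Set A).ncard = 4 := by
    rw [Set.ncard_insert_of_notMem, Set.ncard_insert_of_notMem, Set.ncard_pair] <;>
      simp [h₁₂.ne, h₂₃.ne, h₃₄.ne, h₁₃, h₁₄, h₂₄]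
  have hCcard : C.ncard = 5 := hG.ncard_supp _
  have hCfin : C.Finite := Set.finite_of_ncard_ne_zero (by omega)
  obtain ⟨t, htC, ht⟩ : ∃ t ∈ C, t ∉ ({p₁, p₂, p₃, p₄} : Set A) :=
    Set.exists_mem_notMem_of_ncard_lt_ncard (by omega)
  refine ⟨t, ht, (Set.eq_of_subset_of_ncard_le ?_ ?_ hCfin).symm⟩
  · have h₁ : p₁ ∈ C := rfl
    have h₂ : p₂ ∈ C := SimpleGraph.ConnectedComponent.mem_supp_of_adj_mem_supp _ h₁ h₁₂
    have h₃ : p₃ ∈ C := SimpleGraph.ConnectedComponent.mem_supp_of_adj_mem_supp _ h₂ h₂₃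
    have h₄ : p₄ ∈ C := SimpleGraph.ConnectedComponent.mem_supp_of_adj_mem_supp _ h₃ h₃₄
    simp [Set.insert_subset_iff, htC, h₁, h₂, h₃, h₄]
  · rw [hCcard, Set.ncard_insert_of_notMem ht, hpath]

theorem exists_adj_adj_of_path (hG : IsPentagonUnion G) (h₁₂ : G.Adj p₁ p₂) (h₂₃ : G.Adj p₂ p₃)
    (h₃₄ : G.Adj p₃ p₄) (h₁₃ : p₁ ≠ p₃) (h₂₄ : p₂ ≠ p₄) :
    ∃ t, G.Adj p₄ t ∧ G.Adj t p₁ ∧ t ≠ p₂ ∧ t ≠ p₃ := by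
  have h₁₄ : p₁ ≠ p₄ := by
    rintro rfl
    exact hG.not_adj_of_adj_of_adj h₁₂ h₂₃ h₃₄
  obtain ⟨t, ht, hsupp⟩ := hG.exists_supp_eq_insert h₁₂ h₂₃ h₃₄ h₁₃ h₁₄ h₂₄
  simp only [Set.mem_insert_iff, Set.mem_singleton_iff, not_or] at ht
  obtain ⟨ht₁, ht₂, ht₃, ht₄⟩ := ht
  have hN₂ := neighborSet_eq_pair (hG.ncard_neighborSet p₂) h₁₂.symm h₂₃ h₁₃
  have hN₃ := neighborSet_eq_pair (hG.ncard_neighborSet p₃) h₂₃.symm h₃₄ h₂₄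
  -- The vertices `p₂` and `p₃` already have two neighbours, so `t` can only see `p₁` and `p₄`.
  have hNt : G.neighborSet t ⊆ {p₁, p₄} := by
    intro q htq
    have hqt : t ∈ G.neighborSet q := htq.symm
    have hq : q ∈ (G.connectedComponentMk p₁).supp :=
      SimpleGraph.ConnectedComponent.mem_supp_of_adj_mem_supp _ (by simp [hsupp]) htq
    rw [hsupp] at hq
    rcases hq with rfl | rfl | rfl | rfl | rfl
    · exact absurd htq G.irrefl
    · simp
    · simp [hN₂, ht₁, ht₃] at hqt
    · simp [hN₃, ht₂, ht₄] at hqt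
    · simp
  have hNt_eq : G.neighborSet t = {p₁, p₄} :=
    Set.eq_of_subset_of_ncard_le hNt (by rw [hG.ncard_neighborSet, Set.ncard_pair h₁₄])
  have h₁ : p₁ ∈ G.neighborSet t := by simp [hNt_eq]
  have h₄ : p₄ ∈ G.neighborSet t := by simp [hNt_eq]
  exact ⟨t, h₄.symm, h₁, ht₂, ht₃⟩

/- The pentagon through `ax` leaves `X` along `ax`, and can only return along `bv`. -/
theorem adj_of_forall_crossing (hG : IsPentagonUnion G) {X : Set A} {a b v x : A}
    (hcross : ∀ p ∈ X, ∀ q ∉ X, G.Adj p q → p = a ∧ q = x ∨ p = b ∧ q = v) (haX : a ∈ X)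
    (hxX : x ∉ X) (hab : a ≠ b) (hvx : v ≠ x) (hax : G.Adj a x) (hnab : ¬ G.Adj a b) :
    G.Adj x v := by
  obtain ⟨c, hac, hcx⟩ := hG.exists_adj_ne a x
  obtain ⟨y, hxy, hya⟩ := hG.exists_adj_ne x a
  have hcX : c ∈ X := by
    by_contra hcX
    rcases hcross a haX c hcX hac with ⟨-, rfl⟩ | ⟨rfl, -⟩
    · exact hcx rfl
    · exact hab rfl
  have hyX : y ∉ X := fun hyX ↦ by
    rcases hcross y hyX x hxX hxy.symm with ⟨rfl, -⟩ | ⟨-, rfl⟩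
    · exact hya rfl
    · exact hvx rfl
  obtain ⟨t, hyt, htc, hta, htx⟩ := hG.exists_adj_adj_of_path hac.symm hax hxy hcx hya.symm
  by_cases htX : t ∈ X
  · obtain ⟨rfl, -⟩ | ⟨-, rfl⟩ := hcross t htX y hyX hyt.symm
    · exact absurd rfl hta
    · exact hxy
  · obtain ⟨-, rfl⟩ | ⟨rfl, -⟩ := hcross c hcX t htX htc.symm
    · exact absurd rfl htx
    · exact absurd hac hnab

end IsPentagonUnion

end SimpleGraph

theorem eq_or_eq_of_ncard_eq_three {A : Type*} {s N : Set A} (hs : s.ncard = 3)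
    (hN : ∃ k ∈ N, k ∈ s) {f g m : A} (hf : f ∈ s) (hfN : f ∉ N) (hg : g ∈ s) (hgN : g ∉ N)
    (hfg : f ≠ g) (hm : m ∈ s) (hmN : m ∉ N) : m = f ∨ m = g := by
  obtain ⟨k, hkN, hk⟩ := hN
  have hthree : {f, g, k} = s := by
    refine Set.eq_of_subset_of_ncard_le ?_ ?_ (Set.finite_of_ncard_ne_zero (by omega))
    · simp [Set.insert_subset_iff, hf, hg, hk]
    · rw [hs]
      refine (Set.ncard_eq_three.2 ⟨f, g, k, hfg, ?_, ?_, rfl⟩).ge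
      · exact fun h ↦ hfN (h ▸ hkN)
      · exact fun h ↦ hgN (h ▸ hkN)
  rcases hthree.ge hm with rfl | rfl | rfl
  · exact Or.inl rfl
  · exact Or.inr rfl
  · exact absurd hkN hmN

section Cuts

variable {V E : Type} {ends : E → Sym2 V}

/-- The edge cut `δ(X)`: the edges with exactly one end in `X`. -/
def cut (ends : E → Sym2 V) (X : Set V) : Set E :=
  {e | ∃ a b, a ∈ X ∧ b ∉ X ∧ ends e = s(a, b)}

/-- The edges of the subgraph induced by `X`: those with both ends in `X`. -/
def inducedEdges (ends : E → Sym2 V) (X : Set V) : Set E :=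
  {e | ∀ a ∈ ends e, a ∈ X}

theorem mem_cut_iff {X : Set V} {e : E} {a b : V} (he : ends e = s(a, b)) :
    e ∈ cut ends X ↔ (a ∈ X ∧ b ∉ X) ∨ (b ∈ X ∧ a ∉ X) := by
  constructor
  · rintro ⟨p, q, hp, hq, hpq⟩
    rcases Sym2.eq_iff.1 (he.symm.trans hpq) with ⟨rfl, rfl⟩ | ⟨rfl, rfl⟩
    · exact Or.inl ⟨hp, hq⟩
    · exact Or.inr ⟨hp, hq⟩
  · rintro (⟨ha, hb⟩ | ⟨hb, ha⟩)
    · exact ⟨a, b, ha, hb, he⟩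
    · exact ⟨b, a, hb, ha, he.trans Sym2.eq_swap⟩

theorem mem_inducedEdges_iff {X : Set V} {e : E} {a b : V} (he : ends e = s(a, b)) :
    e ∈ inducedEdges ends X ↔ a ∈ X ∧ b ∈ X := by
  simp [inducedEdges, he]

theorem NoLoops.ne (hl : NoLoops ends) {e : E} {a b : V} (he : ends e = s(a, b)) : a ≠ b := by
  rintro rfl
  exact hl e (by simp [he])

open Classical in
theorem NoLoops.card_filter_mem_ends (hl : NoLoops ends) (X : Finset V) (e : E) :
    (X.filter (· ∈ ends e)).card =
      (if e ∈ cut ends X then 1 else 0) + 2 * (if e ∈ inducedEdges ends X then 1 else 0) := by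
  obtain ⟨a, b, he⟩ : ∃ a b, ends e = s(a, b) := Sym2.exists.1 ⟨_, rfl⟩
  have hfilter : X.filter (· ∈ ends e) = ({a, b} : Finset V).filter (· ∈ X) := by
    ext p
    simp [he, and_comm]
  rw [hfilter, Finset.card_filter, Finset.sum_pair (hl.ne he), if_congr (mem_cut_iff he) rfl rfl,
    if_congr (mem_inducedEdges_iff he) rfl rfl]
  by_cases ha : a ∈ X <;> by_cases hb : b ∈ X <;> simp [ha, hb]

theorem NoLoops.mul_ncard_eq [Finite V] [Finite E] (hl : NoLoops ends) {M : Set E} {X : Set V}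
    {d : ℕ} (hd : ∀ v ∈ X, {e | e ∈ M ∧ v ∈ ends e}.ncard = d) :
    d * X.ncard = (M ∩ cut ends X).ncard + 2 * (M ∩ inducedEdges ends X).ncard := by
  classical
  have := Fintype.ofFinite V
  have := Fintype.ofFinite E
  have hcard (Y : Set E) : ∑ e ∈ M.toFinset, (if e ∈ Y then 1 else 0) = (M ∩ Y).ncard := by
    rw [Finset.sum_boole, Nat.cast_id, Set.ncard_eq_toFinset_card']
    congr 1
    ext e
    simp
  calc d * X.ncard = ∑ v ∈ X.toFinset, (M.toFinset.filter (v ∈ ends ·)).card := by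
        rw [Finset.sum_congr rfl (g := fun _ ↦ d), Finset.sum_const, smul_eq_mul, mul_comm,
          Set.ncard_eq_toFinset_card']
        intro v hv
        rw [← hd v (Set.mem_toFinset.1 hv), Set.ncard_eq_toFinset_card']
        congr 1
        ext e
        simp
    _ = ∑ e ∈ M.toFinset, (X.toFinset.filter (· ∈ ends e)).card :=
        Finset.sum_card_bipartiteAbove_eq_sum_card_bipartiteBelow (fun v e ↦ v ∈ ends e)
    _ = (M ∩ cut ends X).ncard + 2 * (M ∩ inducedEdges ends X).ncard := by
        simp only [hl.card_filter_mem_ends, Set.coe_toFinset]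
        rw [Finset.sum_add_distrib, ← Finset.mul_sum, hcard, hcard]

theorem NoLoops.ncard_eq_of_existsUnique [Finite V] [Finite E] (hl : NoLoops ends) {M : Set E}
    {X : Set V} (hM : ∀ v ∈ X, ∃! e, e ∈ M ∧ v ∈ ends e) :
    X.ncard = (M ∩ cut ends X).ncard + 2 * (M ∩ inducedEdges ends X).ncard := by
  rw [← one_mul X.ncard]
  refine hl.mul_ncard_eq fun v hv ↦ ?_
  obtain ⟨e, he, huniq⟩ := hM v hv
  exact Set.ncard_eq_one.2 ⟨e, Set.eq_singleton_iff_unique_mem.2 ⟨he, huniq⟩⟩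

theorem IsCubic.three_mul_ncard [Finite V] [Finite E] (hc : IsCubic ends) (hl : NoLoops ends)
    (X : Set V) :
    3 * X.ncard = (cut ends X).ncard + 2 * (inducedEdges ends X).ncard := by
  simpa using hl.mul_ncard_eq (M := Set.univ) (X := X) (d := 3) (by simpa using fun v _ ↦ hc v)

theorem IsCubic.even_card [Finite V] [Finite E] (hc : IsCubic ends) (hl : NoLoops ends) :
    Even (Nat.card V) := by
  have hcut : cut ends Set.univ = ∅ := by
    ext e
    simp [cut]
  have hcount := hc.three_mul_ncard hl Set.univ
  rw [hcut, Set.ncard_empty, Set.ncard_univ] at hcount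
  rw [Nat.even_iff]
  omega

theorem IsPerfectMatching.exists_mem_cut [Finite V] [Finite E] {M : Set E}
    (hM : IsPerfectMatching ends M) (hl : NoLoops ends) {X : Set V} (hX : Odd X.ncard) :
    ∃ e ∈ M, e ∈ cut ends X := by
  have hcount := hl.ncard_eq_of_existsUnique (X := X) fun v _ ↦ hM v
  refine Set.nonempty_of_ncard_ne_zero (s := M ∩ cut ends X) fun hzero ↦ ?_
  rw [Nat.odd_iff] at hX
  omega

theorem Reach.mem_of_closed {F : Set E} {X : Set V} {a b : V} (hab : Reach ends F a b)
    (ha : a ∈ X) (hX : ∀ e ∈ F, ∀ p q, ends e = s(p, q) → p ∈ X → q ∈ X) : b ∈ X := by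
  induction hab with
  | refl => exact ha
  | tail _ hstep ih =>
    obtain ⟨e, he, hends⟩ := hstep
    exact hX e he _ _ hends ih

theorem Bridgeless.ncard_cut_ne_one (hb : Bridgeless ends) (X : Set V) :
    (cut ends X).ncard ≠ 1 := by
  intro hone
  obtain ⟨e, he⟩ := Set.ncard_eq_one.1 hone
  obtain ⟨a, b, ha, hbX, hab⟩ : e ∈ cut ends X := by simp [he]
  refine hbX ((hb e a b hab).mem_of_closed ha fun f hf p q hpq hp ↦ ?_)
  by_contra hq
  have hfcut : f ∈ cut ends X := ⟨p, q, hp, hq, hpq⟩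
  exact hf (by simpa [he] using hfcut)

theorem IsCubic.three_le_ncard_cut [Finite V] [Finite E] (hc : IsCubic ends)
    (hl : NoLoops ends) (hb : Bridgeless ends) {X : Set V} (hX : Odd X.ncard) :
    3 ≤ (cut ends X).ncard := by
  have hcount := hc.three_mul_ncard hl X
  have hne := hb.ncard_cut_ne_one X
  rw [Nat.odd_iff] at hX
  omega

end Cuts

section EdgeGraph

variable {V E : Type} {ends : E → Sym2 V}

/-- The simple graph whose edges are the end pairs of the edges in `F`, forgetting multiplicities
and loops. -/
def edgeGraph (ends : E → Sym2 V) (F : Set E) : SimpleGraph V :=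
  SimpleGraph.fromEdgeSet (ends '' F)

theorem NoLoops.edgeGraph_adj (hl : NoLoops ends) {F : Set E} {a b : V} :
    (edgeGraph ends F).Adj a b ↔ ∃ e ∈ F, ends e = s(a, b) := by
  refine (SimpleGraph.fromEdgeSet_adj _).trans (and_iff_left_of_imp ?_)
  rintro ⟨e, -, he⟩
  exact hl.ne he

theorem NoLoops.component_eq_supp (hl : NoLoops ends) (F : Set E) (v : V) :
    component ends F v = ((edgeGraph ends F).connectedComponentMk v).supp := by
  ext w
  have hadj : (edgeGraph ends F).Adj = fun a b ↦ ∃ e ∈ F, ends e = s(a, b) := by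
    ext a b
    exact hl.edgeGraph_adj
  rw [SimpleGraph.ConnectedComponent.mem_supp_iff, SimpleGraph.ConnectedComponent.eq,
    SimpleGraph.reachable_comm, SimpleGraph.reachable_iff_reflTransGen, hadj]
  rfl

theorem IsTwoFactor.ncard_neighborSet_edgeGraph {F : Set E} (hF : IsTwoFactor ends F)
    (hl : NoLoops ends) (hinj : Function.Injective ends) (v : V) :
    ((edgeGraph ends F).neighborSet v).ncard = 2 := by
  have hincidence : (fun w ↦ s(v, w)) '' (edgeGraph ends F).neighborSet v =
      ends '' {e | e ∈ F ∧ v ∈ ends e} := by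
    ext z
    constructor
    · rintro ⟨w, hw, rfl⟩
      obtain ⟨e, heF, he⟩ := hl.edgeGraph_adj.1 hw
      exact ⟨e, ⟨heF, by simp [he]⟩, he⟩
    · rintro ⟨e, ⟨heF, w, he⟩, rfl⟩
      exact ⟨w, hl.edgeGraph_adj.2 ⟨e, heF, he⟩, he.symm⟩
  rw [← hF v, ← Set.ncard_image_of_injective _ hinj, ← hincidence,
    Set.ncard_image_of_injective _ fun _ _ ↦ Sym2.congr_right.1]

theorem IsTwoFactor.eq_or_eq {F : Set E} (hF : IsTwoFactor ends F) {v : V} {e f g : E}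
    (he : e ∈ F ∧ v ∈ ends e) (hf : f ∈ F ∧ v ∈ ends f) (hef : e ≠ f) (hg : g ∈ F ∧ v ∈ ends g) :
    g = e ∨ g = f := by
  have hcard := hF v
  have hpair : {e, f} = {k | k ∈ F ∧ v ∈ ends k} :=
    Set.eq_of_subset_of_ncard_le (Set.pair_subset he hf) (by rw [hcard, Set.ncard_pair hef])
      (Set.finite_of_ncard_ne_zero (by omega))
  exact hpair.ge hg

theorem IsTwoFactor.ncard_component_le_two {F : Set E} (hF : IsTwoFactor ends F) {e f : E}
    (he : e ∈ F) (hf : f ∈ F) (hef : e ≠ f) {a b : V} (hea : ends e = s(a, b))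
    (hfa : ends f = s(a, b)) : (component ends F a).ncard ≤ 2 := by
  have hsub : component ends F a ⊆ {a, b} := by
    intro c hc
    refine Reach.mem_of_closed hc (by simp) fun g hg p q hpq hp ↦ ?_
    have hpab : p ∈ s(a, b) := by simpa using hp
    have hgends : ends g = s(a, b) := by
      rcases hF.eq_or_eq ⟨he, hea ▸ hpab⟩ ⟨hf, hfa ▸ hpab⟩ hef ⟨hg, by simp [hpq]⟩ with rfl | rfl
      · exact hea
      · exact hfa
    have hq : q ∈ s(a, b) := by simp [← hgends, hpq]
    simpa using hq
  calc (component ends F a).ncard ≤ ({a, b} : Set V).ncard := Set.ncard_le_ncard hsub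
    _ ≤ ({b} : Set V).ncard + 1 := Set.ncard_insert_le a {b}
    _ = 2 := by rw [Set.ncard_singleton]

theorem IsPerfectMatching.notMem_of_mem {M : Set E} (hM : IsPerfectMatching ends M) {e f : E}
    (he : e ∈ M) {v : V} (hve : v ∈ ends e) (hvf : v ∈ ends f) (hef : e ≠ f) : f ∉ M :=
  fun hf ↦ hef ((hM v).unique ⟨he, hve⟩ ⟨hf, hvf⟩)

theorem IsCubic.isTwoFactor_compl (hc : IsCubic ends) {M : Set E}
    (hM : IsPerfectMatching ends M) : IsTwoFactor ends Mᶜ := by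
  intro v
  obtain ⟨m, hm, huniq⟩ := hM v
  have hdiff : {e | e ∈ Mᶜ ∧ v ∈ ends e} = {e | v ∈ ends e} \ {m} := by
    ext e
    constructor
    · rintro ⟨heM, hv⟩
      exact ⟨hv, by rintro rfl; exact heM hm.1⟩
    · rintro ⟨hv, hne⟩
      exact ⟨fun heM ↦ hne (huniq e ⟨heM, hv⟩), hv⟩
  have hmem : m ∈ {e | v ∈ ends e} := hm.2
  rw [hdiff, Set.ncard_sdiff_singleton_of_mem hmem, hc v]

theorem TwoFactorsAllC5.isPentagonUnion (h5 : TwoFactorsAllC5 ends) (hl : NoLoops ends)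
    (hinj : Function.Injective ends) {F : Set E} (hF : IsTwoFactor ends F) :
    IsPentagonUnion (edgeGraph ends F) where
  ncard_neighborSet := hF.ncard_neighborSet_edgeGraph hl hinj
  ncard_supp c := by
    induction c using SimpleGraph.ConnectedComponent.ind with
    | h v => rw [← hl.component_eq_supp, h5 F hF]

theorem TwoFactorsAllC5.exists_pentagon_of_path (h5 : TwoFactorsAllC5 ends) (hl : NoLoops ends)
    (hinj : Function.Injective ends) {F : Set E} (hF : IsTwoFactor ends F) {v w x : V} {e₂ e₃ : E}
    (he₂ : ends e₂ = s(v, w)) (he₃ : ends e₃ = s(w, x)) (he₂F : e₂ ∈ F) (he₃F : e₃ ∈ F)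
    (hvx : v ≠ x) :
    ∃ a b, a ≠ w ∧ b ≠ w ∧ (∃ f ∈ F, ends f = s(a, x)) ∧ (∃ g ∈ F, ends g = s(b, v)) ∧
      ∃ h ∈ F, ends h = s(a, b) := by
  have hH := h5.isPentagonUnion hl hinj hF
  obtain ⟨b, hvb, hbw⟩ := hH.exists_adj_ne v w
  obtain ⟨a, hxa, hab, -, haw⟩ := hH.exists_adj_adj_of_path hvb.symm
    (hl.edgeGraph_adj.2 ⟨e₂, he₂F, he₂⟩) (hl.edgeGraph_adj.2 ⟨e₃, he₃F, he₃⟩) hbw hvx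
  exact ⟨a, b, haw, hbw, hl.edgeGraph_adj.1 hxa.symm, hl.edgeGraph_adj.1 hvb.symm,
    hl.edgeGraph_adj.1 hab⟩

end EdgeGraph

section Matchings

variable {V E : Type} {ends : E → Sym2 V}

/-- `M` is a perfect matching of the subgraph induced by `W`. -/
structure IsMatchingOn (ends : E → Sym2 V) (M : Set E) (W : Set V) : Prop where
  existsUnique : ∀ v ∈ W, ∃! e, e ∈ M ∧ v ∈ ends e
  mem_of_mem : ∀ e ∈ M, ∀ v ∈ ends e, v ∈ W

theorem isMatchingOn_singleton {e : E} {a b : V} (he : ends e = s(a, b)) :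
    IsMatchingOn ends {e} {a, b} where
  existsUnique v hv := ⟨e, ⟨rfl, by simpa [he] using hv⟩, fun _ hf ↦ hf.1⟩
  mem_of_mem := by
    rintro f rfl v hv
    simpa [he] using hv

theorem IsMatchingOn.union {M M' : Set E} {W W' : Set V} (hM : IsMatchingOn ends M W)
    (hM' : IsMatchingOn ends M' W') (hWW' : Disjoint W W') :
    IsMatchingOn ends (M ∪ M') (W ∪ W') where
  existsUnique := by
    rintro v (hv | hv)
    · obtain ⟨e, he, huniq⟩ := hM.existsUnique v hv
      refine ⟨e, ⟨Or.inl he.1, he.2⟩, ?_⟩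
      rintro f ⟨hf | hf, hvf⟩
      · exact huniq f ⟨hf, hvf⟩
      · exact absurd (hM'.mem_of_mem f hf v hvf) (Set.disjoint_left.1 hWW' hv)
    · obtain ⟨e, he, huniq⟩ := hM'.existsUnique v hv
      refine ⟨e, ⟨Or.inr he.1, he.2⟩, ?_⟩
      rintro f ⟨hf | hf, hvf⟩
      · exact absurd hv (Set.disjoint_left.1 hWW' (hM.mem_of_mem f hf v hvf))
      · exact huniq f ⟨hf, hvf⟩
  mem_of_mem := by
    rintro e (he | he) v hv
    · exact Or.inl (hM.mem_of_mem e he v hv)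
    · exact Or.inr (hM'.mem_of_mem e he v hv)

theorem IsMatchingOn.even_ncard [Finite V] [Finite E] {M : Set E} {W : Set V}
    (hM : IsMatchingOn ends M W) (hl : NoLoops ends) : Even W.ncard := by
  have hcut : M ∩ cut ends W = ∅ := by
    refine Set.eq_empty_of_forall_notMem ?_
    rintro e ⟨heM, a, b, -, hb, he⟩
    exact hb (hM.mem_of_mem e heM b (by simp [he]))
  have hcount := hl.ncard_eq_of_existsUnique hM.existsUnique
  rw [hcut, Set.ncard_empty] at hcount
  rw [Nat.even_iff]
  omega

theorem NoLoops.exists_isMatchingOn_of_isPerfectMatching (hl : NoLoops ends) {U : Set V}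
    {N : ((edgeGraph ends Set.univ).induce U).Subgraph} (hN : N.IsPerfectMatching) :
    ∃ M, IsMatchingOn ends M U := by
  -- `R` contains one edge from each class of parallel edges.
  obtain ⟨R, hR, hRinj⟩ := Set.exists_image_eq_and_injOn Set.univ ends
  refine ⟨{e | e ∈ R ∧ ∃ a b, N.Adj a b ∧ ends e = s(a.1, b.1)}, ?_, ?_⟩
  · intro v hv
    obtain ⟨b, hvb, huniq⟩ := hN.1 (hN.2 ⟨v, hv⟩)
    obtain ⟨e, heR, he⟩ : s(v, b.1) ∈ ends '' R := by
      rw [hR]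
      exact hl.edgeGraph_adj.1 (N.adj_sub hvb)
    refine ⟨e, ⟨⟨heR, _, b, hvb, he⟩, by simp [he]⟩, ?_⟩
    rintro f ⟨⟨hfR, c, d, hcd, hf⟩, hvf⟩
    refine hRinj hfR heR (hf.trans (Eq.trans ?_ he.symm))
    rw [hf] at hvf
    rcases Sym2.mem_iff.1 hvf with rfl | rfl
    · rw [huniq d hcd]
    · rw [huniq c hcd.symm, Sym2.eq_swap]
  · rintro e ⟨-, a, b, -, he⟩ v hv
    rw [he] at hv
    rcases Sym2.mem_iff.1 hv with rfl | rfl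
    · exact a.2
    · exact b.2

theorem IsMatchingOn.exists_isOddSeparation [Finite V] [Finite E] {M₀ : Set E} {W : Set V}
    (hM₀ : IsMatchingOn ends M₀ W) (hl : NoLoops ends) (hc : IsCubic ends)
    (hext : ¬ ∃ M, IsPerfectMatching ends M ∧ M₀ ⊆ M) :
    ∃ (S : Set V) (n : ℕ) (K : Fin n → Set V),
      IsOddSeparation (edgeGraph ends Set.univ) S K ∧ W ⊆ S ∧ S.ncard + 2 ≤ n + W.ncard := by
  refine exists_isOddSeparation_of_induce_compl ?_ fun N hN ↦ ?_
  · have hadd := Set.ncard_add_ncard_compl W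
    have hV := hc.even_card hl
    have hW := hM₀.even_ncard hl
    rw [Nat.card_coe_set_eq]
    grind
  · obtain ⟨M₁, hM₁⟩ := hl.exists_isMatchingOn_of_isPerfectMatching hN
    have hM := hM₀.union hM₁ disjoint_compl_right
    refine hext ⟨M₀ ∪ M₁, fun v ↦ hM.existsUnique v ?_, Set.subset_union_left⟩
    simp

end Matchings

section OddSeparations

variable {V E : Type} {ends : E → Sym2 V} {S : Set V} {n : ℕ} {K : Fin n → Set V}

theorem IsOddSeparation.cut_subset (hK : IsOddSeparation (edgeGraph ends Set.univ) S K)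
    (hl : NoLoops ends) (i : Fin n) : cut ends (K i) ⊆ cut ends S := by
  rintro e ⟨a, b, ha, hb, he⟩
  refine (mem_cut_iff he).2 (Or.inr ⟨?_, Set.disjoint_left.1 (hK.disjoint i) ha⟩)
  by_contra hbS
  exact hb (hK.mem_of_adj (hl.edgeGraph_adj.2 ⟨e, trivial, he⟩) ha hbS)

theorem IsOddSeparation.pairwise_disjoint_cut
    (hK : IsOddSeparation (edgeGraph ends Set.univ) S K) (hl : NoLoops ends) :
    Pairwise (Function.onFun Disjoint fun i ↦ cut ends (K i)) := by
  intro i j hij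
  refine Set.disjoint_left.2 ?_
  rintro e hi ⟨a, b, ha, -, he⟩
  have haS := Set.disjoint_left.1 (hK.disjoint j) ha
  have hai := Set.disjoint_right.1 (hK.pairwise_disjoint hij) ha
  have hbS : b ∈ S := by
    have := (mem_cut_iff he).1 (hK.cut_subset hl i hi)
    tauto
  have hbi : b ∈ K i := by
    have := (mem_cut_iff he).1 hi
    tauto
  exact Set.disjoint_left.1 (hK.disjoint i) hbi hbS

theorem IsOddSeparation.ncard_iUnion_cut [Finite E]
    (hK : IsOddSeparation (edgeGraph ends Set.univ) S K) (hl : NoLoops ends) :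
    (⋃ i, cut ends (K i)).ncard = ∑ i, (cut ends (K i)).ncard := by
  rw [Set.ncard_iUnion_of_finite (fun _ ↦ Set.toFinite _) (hK.pairwise_disjoint_cut hl),
    finsum_eq_sum_of_fintype]

theorem IsOddSeparation.sum_ncard_cut_le [Finite E]
    (hK : IsOddSeparation (edgeGraph ends Set.univ) S K) (hl : NoLoops ends) :
    ∑ i, (cut ends (K i)).ncard ≤ (cut ends S).ncard := by
  rw [← hK.ncard_iUnion_cut hl]
  exact Set.ncard_le_ncard (Set.iUnion_subset (hK.cut_subset hl))

theorem IsOddSeparation.three_mul_le_sum_ncard_cut [Finite V] [Finite E]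
    (hK : IsOddSeparation (edgeGraph ends Set.univ) S K) (hl : NoLoops ends) (hc : IsCubic ends)
    (hb : Bridgeless ends) : 3 * n ≤ ∑ i, (cut ends (K i)).ncard := by
  have hsum := Finset.card_nsmul_le_sum Finset.univ (fun i ↦ (cut ends (K i)).ncard) 3
    fun i _ ↦ hc.three_le_ncard_cut hl hb (hK.odd_ncard i)
  simpa [mul_comm] using hsum

/-- An odd separation in a cubic graph whose odd sets are bounded by 3-edge-cuts that together
exhaust the edges leaving `S`. -/
structure IsTightOddSeparation (ends : E → Sym2 V) (S : Set V) {n : ℕ} (K : Fin n → Set V) : Prop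
    extends IsOddSeparation (edgeGraph ends Set.univ) S K where
  ncard_cut : ∀ i, (cut ends (K i)).ncard = 3
  iUnion_cut : ⋃ i, cut ends (K i) = cut ends S

theorem IsOddSeparation.isTightOddSeparation [Finite V] [Finite E]
    (hK : IsOddSeparation (edgeGraph ends Set.univ) S K) (hl : NoLoops ends) (hc : IsCubic ends)
    (hb : Bridgeless ends) (hle : (cut ends S).ncard ≤ 3 * n) : IsTightOddSeparation ends S K where
  toIsOddSeparation := hK
  ncard_cut i := by
    have hsum : ∑ _i : Fin n, 3 = ∑ i, (cut ends (K i)).ncard := by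
      refine le_antisymm ?_ ((hK.sum_ncard_cut_le hl).trans ?_)
      · simpa [mul_comm] using hK.three_mul_le_sum_ncard_cut hl hc hb
      · simpa [mul_comm] using hle
    exact ((Finset.sum_eq_sum_iff_of_le fun i _ ↦
      hc.three_le_ncard_cut hl hb (hK.odd_ncard i)).1 hsum i (Finset.mem_univ i)).symm
  iUnion_cut := by
    refine Set.eq_of_subset_of_ncard_le (Set.iUnion_subset (hK.cut_subset hl)) ?_
    rw [hK.ncard_iUnion_cut hl]
    exact hle.trans (hK.three_mul_le_sum_ncard_cut hl hc hb)

theorem IsTightOddSeparation.exists_mem_mem (hK : IsTightOddSeparation ends S K)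
    (hl : NoLoops ends) {a b x : V} (haS : a ∉ S) (hbS : b ∉ S) (hxS : x ∈ S) {f h : E}
    (hf : ends f = s(a, x)) (hh : ends h = s(a, b)) : ∃ i, a ∈ K i ∧ b ∈ K i := by
  have hfS : f ∈ ⋃ i, cut ends (K i) := by
    rw [hK.iUnion_cut, mem_cut_iff hf]
    exact Or.inr ⟨hxS, haS⟩
  obtain ⟨i, hfi⟩ := Set.mem_iUnion.1 hfS
  have ha : a ∈ K i := by
    have hxi := Set.disjoint_right.1 (hK.disjoint i) hxS
    have := (mem_cut_iff hf).1 hfi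
    tauto
  exact ⟨i, ha, hK.mem_of_adj (hl.edgeGraph_adj.2 ⟨h, trivial, hh⟩) ha hbS⟩

end OddSeparations

section Cubic

variable {V E : Type} [Finite V] [Finite E] {ends : E → Sym2 V}

/-- Schönberger's theorem. -/
theorem IsCubic.exists_isPerfectMatching_mem (hc : IsCubic ends) (hl : NoLoops ends)
    (hb : Bridgeless ends) (e : E) : ∃ M, IsPerfectMatching ends M ∧ e ∈ M := by
  by_contra hno
  obtain ⟨a, b, he⟩ : ∃ a b, ends e = s(a, b) := Sym2.exists.1 ⟨_, rfl⟩
  obtain ⟨S, n, K, hK, habS, hcard⟩ :=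
    (isMatchingOn_singleton he).exists_isOddSeparation hl hc (by simpa using hno)
  have heS : e ∈ inducedEdges ends S :=
    (mem_inducedEdges_iff he).2 ⟨habS (by simp), habS (by simp)⟩
  have hpos : 0 < (inducedEdges ends S).ncard := (Set.ncard_pos).2 ⟨e, heS⟩
  have hlower := hK.three_mul_le_sum_ncard_cut hl hc hb
  have hupper := hK.sum_ncard_cut_le hl
  have hcount := hc.three_mul_ncard hl S
  rw [Set.ncard_pair (hl.ne he)] at hcard
  omega

theorem TwoFactorsAllC5.injective (h5 : TwoFactorsAllC5 ends) (hl : NoLoops ends)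
    (hc : IsCubic ends) (hb : Bridgeless ends) : Function.Injective ends := by
  intro e f hends
  by_contra hef
  obtain ⟨a, b, he⟩ : ∃ a b, ends e = s(a, b) := Sym2.exists.1 ⟨_, rfl⟩
  have hf : ends f = s(a, b) := hends ▸ he
  obtain ⟨g, hag, hg⟩ : ∃ g ∈ {k | a ∈ ends k}, g ∉ ({e, f} : Set E) :=
    Set.exists_mem_notMem_of_ncard_lt_ncard (by rw [hc a, Set.ncard_pair hef]; omega)
  simp only [Set.mem_insert_iff, Set.mem_singleton_iff, not_or] at hg
  obtain ⟨M, hM, hgM⟩ := hc.exists_isPerfectMatching_mem hl hb g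
  have heM : e ∉ M := hM.notMem_of_mem hgM hag (by simp [he]) hg.1
  have hfM : f ∉ M := hM.notMem_of_mem hgM hag (by simp [hf]) hg.2
  have hF := hc.isTwoFactor_compl hM
  have hle := hF.ncard_component_le_two heM hfM hef he hf
  rw [h5 _ hF] at hle
  omega

theorem IsCubic.exists_isTightOddSeparation (hc : IsCubic ends) (hl : NoLoops ends)
    (hb : Bridgeless ends) {u v w x : V} {e₁ e₂ e₃ : E}
    (he₁ : ends e₁ = s(u, v)) (he₂ : ends e₂ = s(v, w)) (he₃ : ends e₃ = s(w, x))
    (huw : u ≠ w) (hvx : v ≠ x) (hux : u ≠ x)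
    (hno : ¬ ∃ M, IsPerfectMatching ends M ∧ e₁ ∈ M ∧ e₃ ∈ M) :
    ∃ (S : Set V) (n : ℕ) (K : Fin n → Set V),
      IsTightOddSeparation ends S K ∧ inducedEdges ends S = {e₁, e₂, e₃} := by
  have hvw := hl.ne he₂
  have hdisj : Disjoint ({u, v} : Set V) {w, x} := by
    simp [Set.disjoint_left, huw, hux, hvw, hvx]
  obtain ⟨S, n, K, hK, hWS, hcard⟩ := ((isMatchingOn_singleton he₁).union
    (isMatchingOn_singleton he₃) hdisj).exists_isOddSeparation hl hc
      fun ⟨M, hM, hsub⟩ ↦ hno ⟨M, hM, hsub (by simp), hsub (by simp)⟩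
  rw [Set.ncard_union_eq hdisj, Set.ncard_pair (hl.ne he₁), Set.ncard_pair (hl.ne he₃)] at hcard
  have hsub : {e₁, e₂, e₃} ⊆ inducedEdges ends S := by
    simp only [Set.union_subset_iff, Set.pair_subset_iff] at hWS
    obtain ⟨⟨hu, hv⟩, hw, hx⟩ := hWS
    rintro e (rfl | rfl | rfl)
    · exact (mem_inducedEdges_iff he₁).2 ⟨hu, hv⟩
    · exact (mem_inducedEdges_iff he₂).2 ⟨hv, hw⟩
    · exact (mem_inducedEdges_iff he₃).2 ⟨hw, hx⟩
  have hthree : ({e₁, e₂, e₃} : Set E).ncard = 3 := by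
    refine Set.ncard_eq_three.2 ⟨e₁, e₂, e₃, ?_, ?_, ?_, rfl⟩ <;> rintro rfl <;> grind
  -- `3 (|S| - 2) ≤ 3 n ≤ ∑ |δ(K i)| ≤ |δ(S)| = 3 |S| - 2 |E(S)| ≤ 3 |S| - 6` is tight.
  have hlower := hK.three_mul_le_sum_ncard_cut hl hc hb
  have hupper := hK.sum_ncard_cut_le hl
  have hcount := hc.three_mul_ncard hl S
  have hinduced := Set.ncard_le_ncard hsub
  exact ⟨S, n, K, hK.isTightOddSeparation hl hc hb (by omega),
    (Set.eq_of_subset_of_ncard_le hsub (by omega)).symm⟩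

theorem TwoFactorsAllC5.exists_edge_of_cut (h5 : TwoFactorsAllC5 ends) (hl : NoLoops ends)
    (hc : IsCubic ends) (hb : Bridgeless ends) {X : Set V} (hodd : Odd X.ncard)
    (hthree : (cut ends X).ncard = 3) {a b v x : V} (haX : a ∈ X) (hbX : b ∈ X) (hvX : v ∉ X)
    (hxX : x ∉ X) (hvx : v ≠ x) {f g h : E} (hf : ends f = s(a, x)) (hg : ends g = s(b, v))
    (hh : ends h = s(a, b)) : ∃ e, ends e = s(x, v) := by
  have hinj := h5.injective hl hc hb
  obtain ⟨N, hN, hhN⟩ := hc.exists_isPerfectMatching_mem hl hb h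
  have hfN : f ∉ N := hN.notMem_of_mem hhN (v := a) (by simp [hh]) (by simp [hf]) (by grind)
  have hgN : g ∉ N := hN.notMem_of_mem hhN (v := b) (by simp [hh]) (by simp [hg]) (by grind)
  have hH := h5.isPentagonUnion hl hinj (hc.isTwoFactor_compl hN)
  have hax : (edgeGraph ends Nᶜ).Adj a x := hl.edgeGraph_adj.2 ⟨f, hfN, hf⟩
  have hnab : ¬ (edgeGraph ends Nᶜ).Adj a b := fun hadj ↦ by
    obtain ⟨m, hmN, hm⟩ := hl.edgeGraph_adj.1 hadj
    exact hmN (hinj (hm.trans hh.symm) ▸ hhN)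
  have hcross (p) (hp : p ∈ X) (q) (hq : q ∉ X) (hpq : (edgeGraph ends Nᶜ).Adj p q) :
      p = a ∧ q = x ∨ p = b ∧ q = v := by
    obtain ⟨m, hmN, hm⟩ := hl.edgeGraph_adj.1 hpq
    rcases eq_or_eq_of_ncard_eq_three hthree (hN.exists_mem_cut hl hodd) ⟨a, x, haX, hxX, hf⟩ hfN
      ⟨b, v, hbX, hvX, hg⟩ hgN (by grind) ⟨p, q, hp, hq, hm⟩ hmN with rfl | rfl
    · grind
    · grind
  obtain ⟨e, -, he⟩ := hl.edgeGraph_adj.1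
    (hH.adj_of_forall_crossing hcross haX hxX (hl.ne hh) hvx hax hnab)
  exact ⟨e, he⟩

theorem TwoFactorsAllC5.exists_pentagon_of_inducedEdges_eq (h5 : TwoFactorsAllC5 ends)
    (hl : NoLoops ends) (hc : IsCubic ends) (hb : Bridgeless ends) {v w x : V} {e₁ e₂ e₃ : E}
    (hve₁ : v ∈ ends e₁) (he₂ : ends e₂ = s(v, w)) (he₃ : ends e₃ = s(w, x)) (he₁₂ : e₁ ≠ e₂)
    (hvx : v ≠ x) (hno : ¬ ∃ M, IsPerfectMatching ends M ∧ e₁ ∈ M ∧ e₃ ∈ M) {S : Set V}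
    (hvS : v ∈ S) (hxS : x ∈ S) (hS : inducedEdges ends S = {e₁, e₂, e₃}) :
    ∃ a ∉ S, ∃ b ∉ S, (∃ f, ends f = s(a, x)) ∧ (∃ g, ends g = s(b, v)) ∧
      ∃ h, ends h = s(a, b) := by
  obtain ⟨M, hM, he₁M⟩ := hc.exists_isPerfectMatching_mem hl hb e₁
  have he₂M : e₂ ∉ M := hM.notMem_of_mem he₁M hve₁ (by simp [he₂]) he₁₂
  have he₃M : e₃ ∉ M := fun he₃M ↦ hno ⟨M, hM, he₁M, he₃M⟩
  obtain ⟨a, b, haw, hbw, ⟨f, hfM, hf⟩, ⟨g, hgM, hg⟩, h, -, hh⟩ := h5.exists_pentagon_of_path hl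
    (h5.injective hl hc hb) (hc.isTwoFactor_compl hM) he₂ he₃ he₂M he₃M hvx
  have hvw := hl.ne he₂
  have hwx := hl.ne he₃
  refine ⟨a, fun haS ↦ ?_, b, fun hbS ↦ ?_, ⟨f, hf⟩, ⟨g, hg⟩, h, hh⟩
  · have hfS : f ∈ ({e₁, e₂, e₃} : Set E) := hS ▸ (mem_inducedEdges_iff hf).2 ⟨haS, hxS⟩
    rcases hfS with rfl | rfl | rfl
    · exact hfM he₁M
    · grind
    · grind
  · have hgS : g ∈ ({e₁, e₂, e₃} : Set E) := hS ▸ (mem_inducedEdges_iff hg).2 ⟨hbS, hvS⟩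
    rcases hgS with rfl | rfl | rfl
    · exact hgM he₁M
    · grind
    · grind

end Cubic

end Mg

open Mg in
theorem stmt10_general {V E : Type} [Finite V] [Finite E] {ends : E → Sym2 V}
    (hl : NoLoops ends) (hc : IsCubic ends) (hb : Bridgeless ends) (h5 : TwoFactorsAllC5 ends)
    {u v w x : V} {e₁ e₂ e₃ : E} (he₁ : ends e₁ = s(u, v)) (he₂ : ends e₂ = s(v, w))
    (he₃ : ends e₃ = s(w, x)) (huw : u ≠ w) (hvx : v ≠ x) (hux : u ≠ x) :
    ∃ M : Set E, IsPerfectMatching ends M ∧ e₁ ∈ M ∧ e₃ ∈ M := by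
  by_contra hno
  obtain ⟨S, n, K, hK, hS⟩ :=
    hc.exists_isTightOddSeparation hl hb he₁ he₂ he₃ huw hvx hux hno
  have hvS : v ∈ S := ((mem_inducedEdges_iff he₂).1 (by simp [hS])).1
  have hxS : x ∈ S := ((mem_inducedEdges_iff he₃).1 (by simp [hS])).2
  obtain ⟨a, haS, b, hbS, ⟨f, hf⟩, ⟨g, hg⟩, h, hh⟩ :=
    h5.exists_pentagon_of_inducedEdges_eq hl hc hb (by simp [he₁]) he₂ he₃ (by grind) hvx hno
      hvS hxS hS
  obtain ⟨i, hai, hbi⟩ := hK.exists_mem_mem hl haS hbS hxS hf hh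
  obtain ⟨e, he⟩ := h5.exists_edge_of_cut hl hc hb (hK.odd_ncard i) (hK.ncard_cut i) hai hbi
    (Set.disjoint_right.1 (hK.disjoint i) hvS) (Set.disjoint_right.1 (hK.disjoint i) hxS) hvx
    hf hg hh
  have heS : e ∈ ({e₁, e₂, e₃} : Set E) := hS ▸ (mem_inducedEdges_iff he).2 ⟨hxS, hvS⟩
  rcases heS with rfl | rfl | rfl
  · simp [he₁, hux, hvx] at he
  · simp [he₂, hvx, hl.ne he₃] at he
  · simp [he₃, (hl.ne he₂).symm, hvx.symm] at he

theorem stmt10 {V E : Type} [Fintype V] [Fintype E] (ends : E → Sym2 V)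
    (hl : Mg.NoLoops ends) (hc : Mg.IsCubic ends) (hb : Mg.Bridgeless ends)
    (hconn : Mg.Connected ends) (h5 : Mg.TwoFactorsAllC5 ends) :
    ∀ (u v w x : V) (e₁ e₂ e₃ : E),
      ends e₁ = s(u, v) → ends e₂ = s(v, w) → ends e₃ = s(w, x) →
      u ≠ w → v ≠ x → u ≠ x →
      ∃ M : Set E, Mg.IsPerfectMatching ends M ∧ e₁ ∈ M ∧ e₃ ∈ M := by
  intro u v w x e₁ e₂ e₃ he₁ he₂ he₃ huw hvx hux
  exact stmt10_general hl hc hb h5 he₁ he₂ he₃ huw hvx hux
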